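/- Let A be a finite-dimensional Hopf algebra with basis {a_t} and dual basis {x_t} of A*. Define the left action of D(A) on A* by (x ⊗ a)·y = x₍₂₎(a ⇀ y)S⁻¹(x₍₁₎). Then for all x, y ∈ A*, Σ_t (x_t · y)(a_t · x) = x·y in A*, i.e., the R-matrix R = Σ_t a_t ⊗ x_t ∈ D(A) ⊗ D(A) satisfies m^op ∘ R = m on A* ⊗ A*. -/

import Mathlib

/-- A finite-dimensional Hopf algebra over a field `k`, presented by structure
constants with respect to a finite basis indexed by `ι`.  The underlying space
of the Hopf algebra `A` is `ι → k` (with basis the delta functions `e i`), and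
its dual Hopf algebra `A*` is also modelled on `ι → k` (using the dual basis).

* `mul s t r` is the coefficient of `e r` in `e s * e t`;
* `one` is the coefficient vector of the unit of `A`;
* `comul r s t` is the coefficient of `e s ⊗ e t` in `Δ (e r)`;
* `counit t` is `ε (e t)`;
* `S t r` is the coefficient of `e r` in the antipode `S (e t)`, and `Sinv` is
  the matrix of the (composition) inverse of the antipode.

The axioms express associativity, unitality, coassociativity, counitality,
that `Δ` and `ε` are algebra maps, the antipode identities, and that `Sinv`
is inverse to `S`. -/
structure FinHopfSC (k : Type*) [Field k] (ι : Type*) [Fintype ι] [DecidableEq ι] where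
  mul : ι → ι → ι → k
  one : ι → k
  comul : ι → ι → ι → k
  counit : ι → k
  S : ι → ι → k
  Sinv : ι → ι → k
  assoc : ∀ a b c r, (∑ s, mul a b s * mul s c r) = ∑ s, mul b c s * mul a s r
  one_mul : ∀ b r, (∑ s, one s * mul s b r) = if b = r then 1 else 0
  mul_one : ∀ a r, (∑ s, one s * mul a s r) = if a = r then 1 else 0
  coassoc : ∀ r a b c, (∑ s, comul r s c * comul s a b) = ∑ s, comul r a s * comul s b c
  counit_comul : ∀ r t, (∑ s, comul r s t * counit s) = if r = t then 1 else 0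
  comul_counit : ∀ r t, (∑ s, comul r t s * counit s) = if r = t then 1 else 0
  comul_mul : ∀ a b s t, (∑ r, mul a b r * comul r s t) =
      ∑ a1, ∑ a2, ∑ b1, ∑ b2, comul a a1 a2 * comul b b1 b2 * mul a1 b1 s * mul a2 b2 t
  counit_mul : ∀ a b, (∑ r, mul a b r * counit r) = counit a * counit b
  comul_one : ∀ s t, (∑ r, one r * comul r s t) = one s * one t
  counit_one : (∑ r, one r * counit r) = 1
  antipode_left : ∀ r t, (∑ a, ∑ b, ∑ s, comul r a b * S a s * mul s b t) = counit r * one t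
  antipode_right : ∀ r t, (∑ a, ∑ b, ∑ s, comul r a b * S b s * mul a s t) = counit r * one t
  S_Sinv : ∀ a r, (∑ s, S a s * Sinv s r) = if a = r then 1 else 0
  Sinv_S : ∀ a r, (∑ s, Sinv a s * S s r) = if a = r then 1 else 0

namespace FinHopfSC

variable {k : Type*} [Field k] {ι : Type*} [Fintype ι] [DecidableEq ι]
variable (H : FinHopfSC k ι)

/-- the `i`-th basis vector `a_i` of `A` (equally, the `i`-th dual basis vector
`x_i` of `A*`). -/
def e (i : ι) : ι → k := fun j => if i = j then 1 else 0

/-- the product of `A`. -/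
def mulA (a b : ι → k) : ι → k := fun r => ∑ s, ∑ t, a s * b t * H.mul s t r

/-- the unit of `A`. -/
def oneA : ι → k := H.one

/-- the (convolution) product of the dual Hopf algebra `A*`:
`⟨x y, a⟩ = ⟨x ⊗ y, Δ a⟩`. -/
def mulX (x y : ι → k) : ι → k := fun r => ∑ s, ∑ t, H.comul r s t * x s * y t

/-- the unit of `A*` (the counit of `A`). -/
def oneX : ι → k := H.counit

/-- the antipode of `A`. -/
def SA (a : ι → k) : ι → k := fun r => ∑ t, a t * H.S t r

/-- the inverse of the antipode of `A`. -/
def SAinv (a : ι → k) : ι → k := fun r => ∑ t, a t * H.Sinv t r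

/-- the antipode of `A*` (the transpose of the antipode of `A`). -/
def SX (x : ι → k) : ι → k := fun t => ∑ r, H.S t r * x r

/-- the inverse of the antipode of `A*`. -/
def SXinv (x : ι → k) : ι → k := fun t => ∑ r, H.Sinv t r * x r

/-- the left regular action `a ⇀ x = x₍₁₎ ⟨x₍₂₎, a⟩` of `A` on `A*`, i.e.
`⟨a ⇀ x, b⟩ = ⟨x, b a⟩`. -/
def hit (a x : ι → k) : ι → k := fun r => ∑ s, ∑ t, a s * H.mul r s t * x t

/-- the left adjoint action `ad_x y = x₍₂₎ y S⁻¹(x₍₁₎)` of `A*` (as the Hopf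
algebra `A*` with the opposite coproduct) on `A*`. -/
def adX (x y : ι → k) : ι → k := fun r =>
  ∑ p, ∑ a, ∑ b, H.mul a b p * x p * (H.mulX (e b) (H.mulX y (H.SXinv (e a)))) r

end FinHopfSC

/-!
Pairing `∑ t, (ad_{x_t} y) (a_t ⇀ x)` with `c` and using `∑ t, x_t(d) a_t = d` gives
`∑ x(c₍₄₎ S⁻¹(c₍₃₎) c₍₁₎) y(c₍₂₎)`, which collapses to `∑ x(c₍₁₎) y(c₍₂₎)` because
`c₍₂₎ S⁻¹(c₍₁₎) = ε(c) 1`. In the convolution algebra of linear maps `A → Aᵐᵒᵖ` the products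
appear in reversed order, so that `d ↦ S⁻¹(d₍₃₎) y(d₍₂₎) d₍₁₎` becomes the convolution product of
`id`, `y` and `S⁻¹`, and the collapse says that multiplying it by `id` on the right cancels `S⁻¹`.
-/

open WithConv Coalgebra HopfAlgebra MulOpposite

section ConvDual

/-- The dual `A*` of a coalgebra, with its convolution product. -/
abbrev ConvDual (R A : Type*) [CommSemiring R] [AddCommMonoid A] [Module R A] :=
  WithConv (A →ₗ[R] R)

variable {R A ι : Type*} [CommSemiring R] [Semiring A] [Algebra R A]

/-- The left regular action `a ⇀ φ = φ₍₁₎ ⟨φ₍₂₎, a⟩` of `A` on `A*`, as `⟨a ⇀ φ, c⟩ = ⟨φ, c a⟩`. -/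
def leftRegularAction (a : A) (φ : ConvDual R A) : ConvDual R A :=
  toConv (φ.ofConv ∘ₗ LinearMap.mulRight R a)

/-- A linear endomorphism of `A`, as an element of the convolution algebra of maps into `Aᵐᵒᵖ`. -/
noncomputable def toOpConv (f : A →ₗ[R] A) : WithConv (A →ₗ[R] Aᵐᵒᵖ) :=
  toConv ((opLinearEquiv R).toLinearMap ∘ₗ f)

/-- A functional on `A`, as a scalar-valued map into `Aᵐᵒᵖ`. -/
noncomputable def scalarOp (ψ : ConvDual R A) : WithConv (A →ₗ[R] Aᵐᵒᵖ) :=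
  toConv (Algebra.linearMap R Aᵐᵒᵖ ∘ₗ ψ.ofConv)

/-- The functional `c ↦ φ(F c)` for a map `F` into `Aᵐᵒᵖ`. -/
noncomputable def compUnop (φ : ConvDual R A) (F : WithConv (A →ₗ[R] Aᵐᵒᵖ)) : ConvDual R A :=
  toConv (φ.ofConv ∘ₗ (opLinearEquiv R).symm.toLinearMap ∘ₗ F.ofConv)

variable [Coalgebra R A]

/-- `T` satisfies `c₍₂₎ T(c₍₁₎) = ε(c) 1`, one half of the axioms of an antipode for the opposite
multiplication. The inverse of a bijective antipode has this property. -/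
def IsLeftSkewAntipode (T : A →ₗ[R] A) : Prop :=
  toOpConv T * toOpConv .id = 1

/-- The left adjoint action `ad_φ ψ = φ₍₂₎ ψ T(φ₍₁₎)` of `A*` on itself, where `T` plays the role of
`S⁻¹`. It is given through its pairing `c ↦ φ(T(c₍₃₎) ψ(c₍₂₎) c₍₁₎)` with `A`, which
avoids the coproduct of `A*`. -/
noncomputable def adjointAction (T : A →ₗ[R] A) (φ ψ : ConvDual R A) : ConvDual R A :=
  compUnop φ (toOpConv .id * (scalarOp ψ * toOpConv T))

theorem compUnop_toOpConv_id_mul_scalarOp (φ ψ : ConvDual R A) :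
    compUnop φ (toOpConv .id * scalarOp ψ) = φ * ψ := by
  ext c
  simp [(ℛ R c).convMul_apply, compUnop, toOpConv, scalarOp, ← Algebra.smul_def, mul_comm]

theorem compUnop_scalarOp_mul_toOpConv (φ ψ : ConvDual R A) (T : A →ₗ[R] A) :
    compUnop φ (scalarOp ψ * toOpConv T) = ψ * toConv (φ.ofConv ∘ₗ T) := by
  ext c
  simp [(ℛ R c).convMul_apply, compUnop, toOpConv, scalarOp, ← Algebra.commutes,
    ← Algebra.smul_def]

variable [Fintype ι] {a : ι → A} {x : ι → ConvDual R A}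

theorem sum_compUnop_mul_leftRegularAction (hax : ∀ c, ∑ t, x t c • a t = c)
    (F : WithConv (A →ₗ[R] Aᵐᵒᵖ)) (φ : ConvDual R A) :
    ∑ t, compUnop (x t) F * leftRegularAction (a t) φ = compUnop φ (F * toOpConv .id) := by
  have expand (c d : A) : φ (c * d) = ∑ t, x t d * φ (c * a t) := by
    conv_lhs => rw [← hax d]
    simp [Finset.mul_sum]
  ext c
  simpa [(ℛ R c).convMul_apply, compUnop, toOpConv, leftRegularAction, expand _ (unop _)] using
    Finset.sum_comm

theorem compUnop_toOpConv_id_mul (hax : ∀ c, ∑ t, x t c • a t = c)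
    (φ : ConvDual R A) (F : WithConv (A →ₗ[R] Aᵐᵒᵖ)) :
    compUnop φ (toOpConv .id * F) = ∑ s, ∑ t, φ (a s * a t) • (x t * compUnop (x s) F) := by
  have expand (c d : A) : φ (d * c) = ∑ s, ∑ t, φ (a s * a t) * (x t c * x s d) := by
    conv_lhs => rw [← hax c, ← hax d]
    simp only [Finset.sum_mul_sum, smul_mul_smul_comm, map_sum, map_smul, smul_eq_mul]
    refine Finset.sum_congr rfl fun s _ => Finset.sum_congr rfl fun t _ => ?_
    ring
  ext c
  simpa [(ℛ R c).convMul_apply, compUnop, toOpConv, expand _ (unop _), Finset.mul_sum] using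
    Finset.sum_comm_cycle.symm

theorem adjointAction_eq_sum (hax : ∀ c, ∑ t, x t c • a t = c) (T : A →ₗ[R] A)
    (φ ψ : ConvDual R A) :
    adjointAction T φ ψ =
      ∑ s, ∑ t, φ (a s * a t) • (x t * (ψ * toConv ((x s).ofConv ∘ₗ T))) := by
  simp only [adjointAction, compUnop_toOpConv_id_mul hax, compUnop_scalarOp_mul_toOpConv]

theorem stmt7_general (hax : ∀ c, ∑ t, x t c • a t = c) {T : A →ₗ[R] A}
    (hT : IsLeftSkewAntipode T) (φ ψ : ConvDual R A) :
    ∑ t, adjointAction T (x t) ψ * leftRegularAction (a t) φ = φ * ψ :=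
  calc
    _ = compUnop φ (toOpConv .id * (scalarOp ψ * toOpConv T) * toOpConv .id) :=
      sum_compUnop_mul_leftRegularAction hax _ φ
    _ = compUnop φ (toOpConv .id * scalarOp ψ) := by rw [mul_assoc, mul_assoc, hT, mul_one]
    _ = φ * ψ := compUnop_toOpConv_id_mul_scalarOp φ ψ

end ConvDual

theorem IsLeftSkewAntipode.of_antipode_comp_eq_id {R A : Type*} [CommSemiring R] [Semiring A]
    [HopfAlgebra R A] {T : A →ₗ[R] A} (hinj : Function.Injective (antipode R (A := A)))
    (hT : antipode R ∘ₗ T = .id) : IsLeftSkewAntipode T := by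
  let S : Aᵐᵒᵖ →ₐ[R] A := AlgHom.opComm (antipodeAlgHomOp R A)
  have S_injective : Function.Injective S.toLinearMap := fun u v h => unop_injective (hinj h)
  have S_comp_toOpConv (f : A →ₗ[R] A) :
      S.toLinearMap ∘ₗ (toOpConv f).ofConv = antipode R ∘ₗ f := by
    ext; simp [S, toOpConv]
  have S_comp_one : S.toLinearMap ∘ₗ (1 : WithConv (A →ₗ[R] Aᵐᵒᵖ)).ofConv =
      (1 : WithConv (A →ₗ[R] A)).ofConv := by
    ext; simp [LinearMap.convOne_def, -MulOpposite.algebraMap_apply]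
  refine ofConv_injective ((LinearMap.cancel_left S_injective).1 ?_)
  calc
    _ = (toConv .id * toConv (antipode R) : WithConv (A →ₗ[R] A)).ofConv := by
      rw [LinearMap.algHom_comp_convMul_distrib, S_comp_toOpConv, S_comp_toOpConv, hT,
        LinearMap.comp_id]
    _ = _ := by rw [LinearMap.id_mul_antipode, S_comp_one]

namespace FinHopfSC

open scoped TensorProduct

variable {k : Type*} [Field k] {ι : Type*} [Fintype ι] [DecidableEq ι]

/-- The Hopf algebra `A`: a copy of `ι → k`, so that the structure given by `H` can be registered as
instances without clashing with the pointwise ones. -/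
def Carrier (_H : FinHopfSC k ι) : Type _ := ι → k

variable (H : FinHopfSC k ι)

instance : AddCommGroup H.Carrier := inferInstanceAs (AddCommGroup (ι → k))

instance : Module k H.Carrier := inferInstanceAs (Module k (ι → k))

/-- The basis `a_i` of `A`. -/
noncomputable def basis : Module.Basis ι k H.Carrier := Pi.basisFun k ι

/-- The multiplication of `A` as a bilinear map. It precedes the ring structure, whose axioms are
checked on the basis through it. -/
noncomputable def mulLin : H.Carrier →ₗ[k] H.Carrier →ₗ[k] H.Carrier :=
  H.basis.constr k fun s => H.basis.constr k fun t => ∑ r, H.mul s t r • H.basis r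

@[simp]
theorem mulLin_basis (s t : ι) :
    H.mulLin (H.basis s) (H.basis t) = ∑ r, H.mul s t r • H.basis r := by
  simp [mulLin]

noncomputable instance : Mul H.Carrier := ⟨fun a b => H.mulLin a b⟩

noncomputable instance : One H.Carrier := ⟨∑ r, H.one r • H.basis r⟩

theorem one_eq_sum : (1 : H.Carrier) = ∑ r, H.one r • H.basis r := rfl

theorem mulLin_assoc :
    H.mulLin.compr₂ H.mulLin = (LinearMap.llcomp k _ _ _).compl₁₂ H.mulLin H.mulLin := by
  refine H.basis.ext fun a => H.basis.ext fun b => H.basis.ext fun c =>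
    H.basis.ext_elem fun r => ?_
  simpa [Finsupp.single_apply] using H.assoc a b c r

theorem mulLin_one_left : H.mulLin 1 = .id := by
  refine H.basis.ext fun b => H.basis.ext_elem fun r => ?_
  simpa [one_eq_sum, Finsupp.single_apply] using H.one_mul b r

theorem mulLin_one_right : H.mulLin.flip 1 = .id := by
  refine H.basis.ext fun a => H.basis.ext_elem fun r => ?_
  simpa [one_eq_sum, Finsupp.single_apply] using H.mul_one a r

noncomputable instance : Ring H.Carrier where
  left_distrib _ _ _ := map_add _ _ _
  right_distrib _ _ _ := LinearMap.map_add₂ _ _ _ _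
  zero_mul _ := LinearMap.map_zero₂ _ _
  mul_zero _ := map_zero _
  mul_assoc a b c := congr($(H.mulLin_assoc) a b c)
  one_mul a := congr($(H.mulLin_one_left) a)
  mul_one a := congr($(H.mulLin_one_right) a)
  __ := (inferInstance : AddCommGroup H.Carrier)

noncomputable instance : Algebra k H.Carrier :=
  .ofModule (LinearMap.map_smul₂ H.mulLin) fun c a b => map_smul (H.mulLin a) c b

@[simp]
theorem basis_mul_basis (s t : ι) :
    H.basis s * H.basis t = ∑ r, H.mul s t r • H.basis r :=
  H.mulLin_basis s t

noncomputable instance : CoalgebraStruct k H.Carrier where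
  comul := H.basis.constr k fun r => ∑ s, ∑ t, H.comul r s t • (H.basis s ⊗ₜ[k] H.basis t)
  counit := H.basis.constr k H.counit

@[simp]
theorem comul_basis (r : ι) :
    Coalgebra.comul (R := k) (H.basis r) =
      ∑ s, ∑ t, H.comul r s t • (H.basis s ⊗ₜ[k] H.basis t) :=
  H.basis.constr_basis k _ r

@[simp]
theorem counit_basis (r : ι) : Coalgebra.counit (R := k) (H.basis r) = H.counit r :=
  H.basis.constr_basis k _ r

noncomputable instance : Coalgebra k H.Carrier where
  coassoc := by
    refine H.basis.ext fun r =>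
      (H.basis.tensorProduct (H.basis.tensorProduct H.basis)).ext_elem fun ⟨a, b, c⟩ => ?_
    simpa [TensorProduct.sum_tmul, TensorProduct.tmul_sum, ← TensorProduct.smul_tmul',
      Finsupp.single_apply, ite_and] using H.coassoc r a b c
  rTensor_counit_comp_comul := by
    refine H.basis.ext fun r => (TensorProduct.lid k H.Carrier).injective <|
      H.basis.ext_elem fun t => ?_
    simpa [Finsupp.single_apply] using H.counit_comul r t
  lTensor_counit_comp_comul := by
    refine H.basis.ext fun r => (TensorProduct.rid k H.Carrier).injective <|
      H.basis.ext_elem fun t => ?_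
    simpa [Finsupp.single_apply] using H.comul_counit r t

noncomputable instance : Bialgebra k H.Carrier where
  counit_one := by simpa [one_eq_sum] using H.counit_one
  comul_one := by
    refine (H.basis.tensorProduct H.basis).ext_elem fun ⟨s, t⟩ => ?_
    simpa [one_eq_sum, Algebra.TensorProduct.one_def, Finsupp.single_apply, ite_and] using
      (H.comul_one s t).trans (mul_comm _ _)
  mul_compr₂_counit := by
    refine H.basis.ext fun a => H.basis.ext fun b => ?_
    simpa using H.counit_mul a b
  mul_compr₂_comul := by
    refine H.basis.ext fun a => H.basis.ext fun b =>
      (H.basis.tensorProduct H.basis).ext_elem fun ⟨s, t⟩ => ?_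
    simp only [LinearMap.compr₂_apply, LinearMap.compl₁₂_apply, LinearMap.mul_apply',
      comul_basis, Finset.sum_mul]
    simpa [Finset.mul_sum, Finsupp.single_apply, mul_comm, mul_left_comm, mul_assoc] using
      H.comul_mul a b s t

noncomputable instance : HopfAlgebra k H.Carrier where
  antipode := H.basis.constr k fun t => ∑ r, H.S t r • H.basis r
  mul_antipode_rTensor_comul := by
    refine H.basis.ext fun r => H.basis.ext_elem fun t => ?_
    simpa [Algebra.algebraMap_eq_smul_one, one_eq_sum, Finset.sum_mul, Finset.mul_sum,
      Finsupp.single_apply, mul_assoc] using H.antipode_left r t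
  mul_antipode_lTensor_comul := by
    refine H.basis.ext fun r => H.basis.ext_elem fun t => ?_
    simpa [Algebra.algebraMap_eq_smul_one, one_eq_sum, Finset.mul_sum, Finsupp.single_apply,
      mul_assoc] using H.antipode_right r t

@[simp]
theorem antipode_basis (t : ι) :
    antipode k (H.basis t) = ∑ r, H.S t r • H.basis r :=
  H.basis.constr_basis k _ t

/-- The inverse of the antipode of `A`. -/
noncomputable def antipodeInv : H.Carrier →ₗ[k] H.Carrier :=
  H.basis.constr k fun t => ∑ r, H.Sinv t r • H.basis r

@[simp]
theorem antipodeInv_basis (t : ι) :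
    H.antipodeInv (H.basis t) = ∑ r, H.Sinv t r • H.basis r :=
  H.basis.constr_basis k _ t

theorem antipode_comp_antipodeInv : antipode k ∘ₗ H.antipodeInv = .id := by
  refine H.basis.ext fun a => H.basis.ext_elem fun r => ?_
  simpa [Finsupp.single_apply] using H.Sinv_S a r

theorem antipodeInv_comp_antipode : H.antipodeInv ∘ₗ antipode k = .id := by
  refine H.basis.ext fun a => H.basis.ext_elem fun r => ?_
  simpa [Finsupp.single_apply] using H.S_Sinv a r

theorem isLeftSkewAntipode_antipodeInv : IsLeftSkewAntipode H.antipodeInv :=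
  .of_antipode_comp_eq_id
    (Function.LeftInverse.injective (g := H.antipodeInv)
      fun a => congr($(H.antipodeInv_comp_antipode) a))
    H.antipode_comp_antipodeInv

/-- The element of `A*` with given coefficients in the dual basis `x_i`. -/
noncomputable def functional : (ι → k) ≃ₗ[k] ConvDual k H.Carrier :=
  H.basis.constr k ≪≫ₗ (WithConv.linearEquiv k _).symm

@[simp]
theorem functional_apply_basis (x : ι → k) (r : ι) : H.functional x (H.basis r) = x r :=
  H.basis.constr_basis k x r

theorem convDual_ext {φ ψ : ConvDual k H.Carrier}
    (h : ∀ r, φ (H.basis r) = ψ (H.basis r)) : φ = ψ :=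
  ofConv_injective <| H.basis.ext h

theorem functional_mulX (x y : ι → k) :
    H.functional (H.mulX x y) = H.functional x * H.functional y := by
  refine H.convDual_ext fun r => ?_
  simp [mulX, mul_assoc]

theorem functional_SXinv (x : ι → k) :
    H.functional (H.SXinv x) = toConv ((H.functional x).ofConv ∘ₗ H.antipodeInv) := by
  refine H.convDual_ext fun t => ?_
  simp [SXinv]

theorem functional_hit_e (t : ι) (x : ι → k) :
    H.functional (H.hit (e t) x) = leftRegularAction (H.basis t) (H.functional x) := by
  refine H.convDual_ext fun r => ?_
  simp [hit, leftRegularAction, e]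

theorem sum_functional_e_smul_basis (c : H.Carrier) :
    ∑ t, H.functional (e t) c • H.basis t = c := by
  refine H.basis.ext_elem fun i => ?_
  simp [functional, e, Module.Basis.constr_apply_fintype]

theorem functional_adX (x y : ι → k) :
    H.functional (H.adX x y) =
      adjointAction H.antipodeInv (H.functional x) (H.functional y) := by
  rw [adjointAction_eq_sum H.sum_functional_e_smul_basis]
  simp only [← functional_SXinv, ← functional_mulX]
  refine H.convDual_ext fun r => ?_
  simpa [adX, Finset.sum_mul] using Finset.sum_comm_cycle.symm

end FinHopfSC

open FinHopfSC in
/-- for the left action of the Drinfeld double `D(A)` on `A*`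
(by `(x ⊗ a) · y = x₍₂₎ (a ⇀ y) S⁻¹(x₍₁₎)`), the `R`-matrix
`R = ∑ t, a_t ⊗ x_t` satisfies `m ∘ᵒᵖ R = m` on `A* ⊗ A*`:
`∑ t, (ad_{x_t} y) (a_t ⇀ x) = x y` for all `x y ∈ A*`. -/
theorem stmt7 (k : Type*) [Field k] (ι : Type*) [Fintype ι] [DecidableEq ι]
    (H : FinHopfSC k ι) (x y : ι → k) :
    (∑ t, H.mulX (H.adX (e t) y) (H.hit (e t) x)) = H.mulX x y := by
  refine H.functional.injective ?_
  simpa [functional_mulX, functional_adX, functional_hit_e] using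
    stmt7_general H.sum_functional_e_smul_basis H.isLeftSkewAntipode_antipodeInv _ _
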